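/- arXiv:1207.1333 — 7 statements merged into one kernel-verified Lean document; each statement's English description precedes it below -/
import Mathlib

section
/- Let f ∈ E and let A be chosen uniformly at random among all subsets of E. Then the probability that simultaneously f ∉ A and j1(A) ≤ j2(A) (as elements of ℕ∞) is at least 1/4. -/
open scoped Classical

/-- `Nset e j` is the set of the `j` largest-weight elements of the ground set,
given the enumeration `e` of the ground set in strictly decreasing order of weight. -/
noncomputable def Nset {α : Type*} {n : ℕ} (e : Fin n → α) (j : ℕ) : Set α :=
  e '' {m : Fin n | (m : ℕ) < j}

/-- `jOne M e f A = sInf {j : ℕ | f ∈ M.closure ((N_j ∩ A) \ {f})}`, as an element of `ℕ∞`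
(equal to `⊤` when no such `j` exists). -/
noncomputable def jOne {α : Type*} {n : ℕ} (M : Matroid α) (e : Fin n → α) (f : α)
    (A : Set α) : ℕ∞ :=
  sInf ((fun j : ℕ => (j : ℕ∞)) '' {j : ℕ | f ∈ M.closure ((Nset e j ∩ A) \ {f})})

/-- `jTwo M e f A = sInf {j : ℕ | f ∈ M.closure ((N_j \ A) \ {f})}`, as an element of `ℕ∞`
(equal to `⊤` when no such `j` exists). -/
noncomputable def jTwo {α : Type*} {n : ℕ} (M : Matroid α) (e : Fin n → α) (f : α)
    (A : Set α) : ℕ∞ :=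
  sInf ((fun j : ℕ => (j : ℕ∞)) '' {j : ℕ | f ∈ M.closure ((Nset e j \ A) \ {f})})

/-!
Conditioned on `f ∉ A`, an event of probability at least `1 / 2`, the set `A` is uniform among the
subsets of `E \ {f}`. Complementation in `E \ {f}` preserves this distribution and swaps `j1` and
`j2`, so `j1 ≤ j2` holds with conditional probability at least `1 / 2`.
-/

theorem card_le_two_mul_card_filter_le_of_swap {ι β : Type*} [LinearOrder β] {s : Finset ι}
    {σ : ι → ι} {u v : ι → β} (hmaps : Set.MapsTo σ s s) (hinv : Set.LeftInvOn σ σ s)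
    (hswap : ∀ a ∈ s, u (σ a) = v a) :
    s.card ≤ 2 * (s.filter fun a => u a ≤ v a).card := by
  have hle : (s.filter fun a => ¬ u a ≤ v a).card ≤ (s.filter fun a => u a ≤ v a).card := by
    refine Finset.card_le_card_of_injOn σ (fun a ha => ?_)
      (hinv.injOn.mono (Finset.filter_subset _ s))
    obtain ⟨has, hlt⟩ := Finset.mem_filter.mp ha
    have hvσ : v (σ a) = u a := by rw [← hswap _ (hmaps has), hinv has]
    refine Finset.mem_filter.mpr ⟨hmaps has, ?_⟩
    rw [hswap a has, hvσ]
    exact (not_le.mp hlt).le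
  have hsplit := Finset.card_filter_add_card_filter_not (s := s) fun a => u a ≤ v a
  omega

section

variable {α : Type*} (M : Matroid α) {k : ℕ} {e : Fin k → α} {f : α}

theorem jOne_sdiff {T : Set α} (he : Set.range e ⊆ insert f T) (A : Set α) :
    jOne M e f (T \ A) = jTwo M e f A := by
  have hN (j : ℕ) : (Nset e j ∩ (T \ A)) \ {f} = (Nset e j \ A) \ {f} := by
    ext x
    have hx : x ∈ Nset e j → x = f ∨ x ∈ T := fun h => he (Set.image_subset_range _ _ h)
    simp only [Set.mem_sdiff, Set.mem_inter_iff, Set.mem_singleton_iff]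
    tauto
  simp only [jOne, jTwo, hN]

theorem two_pow_card_le_two_mul_card_filter_jOne_le_jTwo {T : Finset α}
    (he : Set.range e ⊆ insert f ↑T) :
    2 ^ T.card ≤
      2 * (T.powerset.filter fun A : Finset α => jOne M e f ↑A ≤ jTwo M e f ↑A).card := by
  rw [← Finset.card_powerset]
  refine card_le_two_mul_card_filter_le_of_swap (σ := (T \ ·))
    (fun A _ => Finset.mem_powerset.mpr Finset.sdiff_subset)
    (fun A hA => Finset.sdiff_sdiff_eq_self (Finset.mem_powerset.mp hA)) (fun A _ => ?_)
  rw [Finset.coe_sdiff, jOne_sdiff M he]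

theorem freeOrder_prob_quarter_general {S : Finset α} (he : Set.range e ⊆ insert f ↑S) :
    (1 : ℝ) / 4 ≤
      ((S.powerset.filter
          (fun A : Finset α => f ∉ A ∧ jOne M e f ↑A ≤ jTwo M e f ↑A)).card : ℝ) /
        2 ^ S.card := by
  have hcond : S.powerset.filter (fun A : Finset α => f ∉ A ∧ jOne M e f ↑A ≤ jTwo M e f ↑A) =
      (S.erase f).powerset.filter (fun A : Finset α => jOne M e f ↑A ≤ jTwo M e f ↑A) := by
    ext A
    simp only [Finset.mem_filter, Finset.mem_powerset, Finset.subset_erase, and_assoc]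
  have he' : Set.range e ⊆ insert f ↑(S.erase f) := by
    rwa [Finset.coe_erase, Set.insert_sdiff_singleton]
  have hhalf := two_pow_card_le_two_mul_card_filter_jOne_le_jTwo M he'
  have herase : 2 ^ S.card ≤ 2 * 2 ^ (S.erase f).card := by
    rw [← pow_succ']
    exact Nat.pow_le_pow_right two_pos (Nat.le_succ_of_pred_le Finset.pred_card_le_card_erase)
  have hquarter : 2 ^ S.card ≤
      4 * ((S.erase f).powerset.filter fun A : Finset α => jOne M e f ↑A ≤ jTwo M e f ↑A).card := by
    omega
  rw [hcond, div_le_div_iff₀ four_pos (by positivity), one_mul, mul_comm]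
  exact_mod_cast hquarter

end

/-- For `f ∈ E` and `A` uniformly distributed among the `2 ^ n` subsets of the ground set `E`,
the probability that simultaneously `f ∉ A` and `j1(A) ≤ j2(A)` is at least `1/4`. -/
theorem freeOrder_prob_quarter {α : Type*} (M : Matroid α) (hE : M.E.Finite) (n : ℕ)
    (hcard : hE.toFinset.card = n)
    (w : α → ℝ) (hw : Set.InjOn w M.E)
    (e : Fin n → α) (he : Set.range e = M.E)
    (hmono : ∀ i j : Fin n, i < j → w (e j) < w (e i))
    (f : α) (hf : f ∈ M.E) :
    (1 : ℝ) / 4 ≤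
      ((hE.toFinset.powerset.filter
          (fun A : Finset α => f ∉ A ∧ jOne M e f ↑A ≤ jTwo M e f ↑A)).card : ℝ) / 2 ^ n := by
  subst hcard
  exact freeOrder_prob_quarter_general M <| by
    rw [he, hE.coe_toFinset]
    exact Set.subset_insert f M.E
end

section
/- Let A ⊆ E and f ∈ E \ A. Then there exists a maximum-weight independent subset of A ∪ {f} containing f if and only if f ∉ M.closure({a ∈ A : w(a) > w(f)}). -/
/-- `B` is a maximum-weight independent subset of `S`: `B ⊆ S`, `B` is independent in `M`,
and its total weight is at least that of every independent subset of `S`. -/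
def MaxWeightIndep {α : Type*} (M : Matroid α) (w : α → ℝ) (S B : Set α) : Prop :=
  B ⊆ S ∧ M.Indep B ∧ ∀ C ⊆ S, M.Indep C → ∑ᶠ x ∈ C, w x ≤ ∑ᶠ x ∈ B, w x

/-!
If `f` lies in a maximum-weight independent set `B` and also in the closure of the elements heavier
than `f`, then some heavier `a` is outside the closure of `B \ {f}`, and replacing `f` by `a`
increases the weight. Conversely, start from any maximum-weight independent set `B` not containing
`f`. If `f` is outside the closure of `B`, it can be added to `B`, which loses no weight since
`0 ≤ w f`. Otherwise the fundamental circuit of `f` in `B` contains an element `e ≠ f` which is not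
heavier than `f`, since `f` is not spanned by the heavier elements, and replacing `e` by `f` does
not decrease the weight.
-/

section

variable {α : Type*} {M : Matroid α} {w : α → ℝ} {S X B C : Set α} {e f : α}

lemma finsum_mem_insert_sdiff_singleton_add {R : Type*} [AddCommMonoid R] (g : α → R)
    (hB : B.Finite) (he : e ∈ B) (hf : f ∉ B \ {e}) :
    ∑ᶠ x ∈ insert f (B \ {e}), g x + g e = ∑ᶠ x ∈ B, g x + g f := by
  have hBe : (B \ {e}).Finite := hB.sdiff
  have h_sum : ∑ᶠ x ∈ B, g x = g e + ∑ᶠ x ∈ B \ {e}, g x := by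
    rw [← finsum_mem_insert g (by simp) hBe, Set.insert_sdiff_self_of_mem he]
  rw [finsum_mem_insert g hf hBe, h_sum]
  abel

lemma exists_indep_insert_sdiff_of_mem_of_mem_closure (hB : M.Indep B) (he : e ∈ B)
    (heX : e ∈ M.closure X) : ∃ f ∈ X, f ∉ B \ {e} ∧ M.Indep (insert f (B \ {e})) := by
  have hBe : M.Indep (B \ {e}) := hB.sdiff {e}
  obtain ⟨f, ⟨hfX, hfE⟩, hf⟩ : ∃ f ∈ X ∩ M.E, f ∉ M.closure (B \ {e}) := by
    by_contra! h_span
    rw [← M.closure_inter_ground] at heX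
    exact hB.notMem_closure_sdiff_of_mem he
      (M.closure_subset_closure_of_subset_closure h_span heX)
  exact ⟨f, hfX, fun hfB ↦ hf (M.mem_closure_of_mem' hfB hfE),
    hBe.insert_indep_iff.2 (Or.inl ⟨hfE, hf⟩)⟩

lemma exists_indep_insert_sdiff_of_mem_closure_of_notMem_closure (hB : M.Indep B)
    (hfB : f ∈ M.closure B) (hfX : f ∉ M.closure X) :
    ∃ e ∈ B \ X, M.Indep (insert f (B \ {e})) := by
  by_cases hf : f ∈ B
  · have hf_notMem : f ∉ X := fun h ↦ hfX (M.mem_closure_of_mem' h)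
    exact ⟨f, ⟨hf, hf_notMem⟩, by rwa [Set.insert_sdiff_self_of_mem hf]⟩
  have h_circuit := hB.fundCircuit_isCircuit hfB hf
  obtain ⟨e, ⟨heC, hef⟩, heX⟩ : ∃ e ∈ M.fundCircuit f B \ {f}, e ∉ X := by
    by_contra! h_subset
    exact hfX (M.closure_subset_closure h_subset
      (h_circuit.mem_closure_sdiff_singleton_of_mem (M.mem_fundCircuit f B)))
  refine ⟨e, ⟨(M.fundCircuit_subset_insert f B heC).resolve_left hef, heX⟩, ?_⟩
  rw [Set.insert_sdiff_singleton_comm (Ne.symm hef)]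
  exact (hB.mem_fundCircuit_iff hfB hf).1 heC

lemma exists_maxWeightIndep (M : Matroid α) (w : α → ℝ) (hS : S.Finite) :
    ∃ B, MaxWeightIndep M w S B := by
  obtain ⟨B, ⟨hBS, hB⟩, hmax⟩ := Set.exists_max_image {B | B ⊆ S ∧ M.Indep B}
    (fun B ↦ ∑ᶠ x ∈ B, w x) (hS.finite_subsets.subset fun _ h ↦ h.1)
    ⟨∅, S.empty_subset, M.empty_indep⟩
  exact ⟨B, hBS, hB, fun C hCS hC ↦ hmax C ⟨hCS, hC⟩⟩

namespace MaxWeightIndep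

lemma of_finsum_le (hB : MaxWeightIndep M w S B) (hCS : C ⊆ S) (hC : M.Indep C)
    (hle : ∑ᶠ x ∈ B, w x ≤ ∑ᶠ x ∈ C, w x) : MaxWeightIndep M w S C :=
  ⟨hCS, hC, fun D hDS hD ↦ (hB.2.2 D hDS hD).trans hle⟩

lemma insert_of_nonneg (hB : MaxWeightIndep M w S B) (hBfin : B.Finite) (hfS : f ∈ S)
    (hI : M.Indep (insert f B)) (hf : 0 ≤ w f) : MaxWeightIndep M w S (insert f B) := by
  by_cases hfB : f ∈ B
  · rwa [Set.insert_eq_of_mem hfB]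
  refine hB.of_finsum_le (Set.insert_subset hfS hB.1) hI ?_
  rw [finsum_mem_insert w hfB hBfin]
  exact le_add_of_nonneg_left hf

lemma insert_sdiff_of_le (hB : MaxWeightIndep M w S B) (hBfin : B.Finite) (he : e ∈ B)
    (hfS : f ∈ S) (hf : f ∉ B \ {e}) (hI : M.Indep (insert f (B \ {e}))) (hef : w e ≤ w f) :
    MaxWeightIndep M w S (insert f (B \ {e})) := by
  refine hB.of_finsum_le (Set.insert_subset hfS (Set.sdiff_subset.trans hB.1)) hI ?_
  linarith [finsum_mem_insert_sdiff_singleton_add w hBfin he hf]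

lemma le_of_indep_insert_sdiff (hB : MaxWeightIndep M w S B) (hBfin : B.Finite) (he : e ∈ B)
    (hfS : f ∈ S) (hf : f ∉ B \ {e}) (hI : M.Indep (insert f (B \ {e}))) : w f ≤ w e := by
  have h_max := hB.2.2 _ (Set.insert_subset hfS (Set.sdiff_subset.trans hB.1)) hI
  linarith [finsum_mem_insert_sdiff_singleton_add w hBfin he hf]

lemma notMem_closure_setOf_lt (hB : MaxWeightIndep M w S B) (hBfin : B.Finite) (he : e ∈ B) :
    e ∉ M.closure {a | a ∈ S ∧ w e < w a} := by
  intro he_closure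
  obtain ⟨a, ⟨haS, hlt⟩, haB, hI⟩ :=
    exists_indep_insert_sdiff_of_mem_of_mem_closure hB.2.1 he he_closure
  exact hlt.not_ge (hB.le_of_indep_insert_sdiff hBfin he haS haB hI)

lemma exists_mem_of_notMem_closure_setOf_lt (hB : MaxWeightIndep M w S B) (hBfin : B.Finite)
    (hfS : f ∈ S) (hfE : f ∈ M.E) (hf0 : 0 ≤ w f)
    (hf : f ∉ M.closure {a | a ∈ S ∧ w f < w a}) : ∃ C, MaxWeightIndep M w S C ∧ f ∈ C := by
  by_cases hfB : f ∈ B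
  · exact ⟨B, hB, hfB⟩
  by_cases hf_closure : f ∈ M.closure B
  · obtain ⟨e, ⟨heB, he⟩, hI⟩ :=
      exists_indep_insert_sdiff_of_mem_closure_of_notMem_closure hB.2.1 hf_closure hf
    have hef : w e ≤ w f := not_lt.1 fun hlt ↦ he ⟨hB.1 heB, hlt⟩
    exact ⟨_, hB.insert_sdiff_of_le hBfin heB hfS (fun h ↦ hfB h.1) hI hef, Set.mem_insert _ _⟩
  · have hI : M.Indep (insert f B) := hB.2.1.insert_indep_iff.2 (Or.inl ⟨hfE, hf_closure⟩)
    exact ⟨_, hB.insert_of_nonneg hBfin hfS hI hf0, Set.mem_insert _ _⟩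

end MaxWeightIndep

theorem exists_maxWeightIndep_insert_iff_general (M : Matroid α) (w : α → ℝ) {A : Set α}
    (hA : A.Finite) (hfE : f ∈ M.E) (hf0 : 0 ≤ w f) :
    (∃ B : Set α, MaxWeightIndep M w (A ∪ {f}) B ∧ f ∈ B) ↔
      f ∉ M.closure {a | a ∈ A ∧ w f < w a} := by
  have hS : (A ∪ {f}).Finite := hA.union (Set.finite_singleton f)
  have h_heavier : {a | a ∈ A ∧ w f < w a} = {a | a ∈ A ∪ {f} ∧ w f < w a} := by
    ext a
    grind
  rw [h_heavier]
  constructor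
  · rintro ⟨B, hB, hfB⟩
    exact hB.notMem_closure_setOf_lt (hS.subset hB.1) hfB
  · intro hf
    obtain ⟨B, hB⟩ := exists_maxWeightIndep M w hS
    exact hB.exists_mem_of_notMem_closure_setOf_lt (hS.subset hB.1) (by simp) hfE hf0 hf

end

/-- For `A ⊆ E` and `f ∈ E \ A`, there exists a maximum-weight independent subset of
`A ∪ {f}` containing `f` if and only if `f ∉ M.closure {a ∈ A : w a > w f}`. -/
theorem exists_maxWeightIndep_insert_iff {α : Type*} (M : Matroid α) (hE : M.E.Finite)
    (w : α → ℝ) (hw0 : ∀ x ∈ M.E, 0 ≤ w x) (hw : Set.InjOn w M.E)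
    (A : Set α) (hA : A ⊆ M.E) (f : α) (hf : f ∈ M.E \ A) :
    (∃ B : Set α, MaxWeightIndep M w (A ∪ {f}) B ∧ f ∈ B) ↔
      f ∉ M.closure {a | a ∈ A ∧ w f < w a} :=
  exists_maxWeightIndep_insert_iff_general M w (hE.subset hA) hf.1 (hw0 f hf.1)
end

section
/- Let A ⊆ E, let B be a maximum-weight independent subset of E, and let B_A be a maximum-weight independent subset of A. Then B ∩ A ⊆ B_A. -/
/-!
Call an element heavier than `e` if its weight exceeds `w e`. For an element `e ∈ S` of positive
weight, membership in the optimum `B` of `S` is decided by the heavier elements of `S` alone: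
`e ∈ B` exactly when `e` is not in their closure. If `e ∈ B`, a heavier element of `S` outside the
closure of `B \ {e}` could profitably replace `e`; so the heavier elements all lie in that closure,
which omits `e`. If `e ∉ B`, then `e` is spanned by `B`, as adding it would increase the weight.
Every other element of its fundamental circuit can be exchanged for `e`, hence is heavier because
weights are distinct, and these elements span `e`. Passing from `S` to `A ⊆ S` shrinks the set of
heavier elements and with it their closure, so an element of `A` chosen from `S` is also chosen
from `A`.
-/

theorem add_finsum_mem_sdiff_singleton {α N : Type*} [AddCommMonoid N] (g : α → N)
    {s : Set α} (hs : s.Finite) {a : α} (ha : a ∈ s) :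
    g a + ∑ᶠ x ∈ s \ {a}, g x = ∑ᶠ x ∈ s, g x := by
  rw [← finsum_mem_singleton (f := g),
    finsum_mem_add_sdiff (Set.singleton_subset_iff.2 ha) hs]

theorem finsum_mem_insert_sdiff_singleton_add_s7 {α N : Type*} [AddCommMonoid N] (g : α → N)
    {s : Set α} (hs : s.Finite) {a b : α} (ha : a ∈ s) (hb : b ∉ s) :
    ∑ᶠ x ∈ insert b (s \ {a}), g x + g a = g b + ∑ᶠ x ∈ s, g x := by
  rw [finsum_mem_insert g (fun h ↦ hb h.1) hs.sdiff, add_assoc, add_comm _ (g a),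
    add_finsum_mem_sdiff_singleton g hs ha]

namespace MaxWeightIndep

variable {α : Type*} {M : Matroid α} {w : α → ℝ} {S B : Set α} {e f : α}

theorem subset (hB : MaxWeightIndep M w S B) : B ⊆ S := hB.1

theorem indep (hB : MaxWeightIndep M w S B) : M.Indep B := hB.2.1

theorem finsum_le (hB : MaxWeightIndep M w S B) {C : Set α} (hCS : C ⊆ S) (hC : M.Indep C) :
    ∑ᶠ x ∈ C, w x ≤ ∑ᶠ x ∈ B, w x :=
  hB.2.2 C hCS hC

theorem weight_nonneg (hB : MaxWeightIndep M w S B) (hfin : B.Finite) (he : e ∈ B) : 0 ≤ w e := by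
  have hle : ∑ᶠ x ∈ B \ {e}, w x ≤ ∑ᶠ x ∈ B, w x :=
    hB.finsum_le (Set.sdiff_subset.trans hB.subset) (hB.indep.sdiff _)
  linarith [add_finsum_mem_sdiff_singleton w hfin he]

theorem mem_closure_of_weight_pos (hB : MaxWeightIndep M w S B) (hfin : B.Finite) (heS : e ∈ S)
    (heE : e ∈ M.E) (hpos : 0 < w e) : e ∈ M.closure B := by
  by_contra hcl
  obtain ⟨hindep, heB⟩ := hB.indep.notMem_closure_iff.1 hcl
  have hle := hB.finsum_le (Set.insert_subset heS hB.subset) hindep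
  rw [finsum_mem_insert w heB hfin] at hle
  linarith

theorem weight_le_of_indep_insert_sdiff (hB : MaxWeightIndep M w S B) (hfin : B.Finite)
    (heB : e ∈ B) (hfS : f ∈ S) (hfB : f ∉ B) (hindep : M.Indep (insert f (B \ {e}))) :
    w f ≤ w e := by
  have hle := hB.finsum_le (Set.insert_subset hfS (Set.sdiff_subset.trans hB.subset)) hindep
  linarith [finsum_mem_insert_sdiff_singleton_add_s7 w hfin heB hfB]

theorem mem_closure_sdiff_singleton_of_weight_lt (hB : MaxWeightIndep M w S B) (hfin : B.Finite)
    (heB : e ∈ B) (hfS : f ∈ S) (hfE : f ∈ M.E) (hlt : w e < w f) :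
    f ∈ M.closure (B \ {e}) := by
  by_contra hcl
  obtain ⟨hindep, hfB⟩ := (hB.indep.sdiff {e}).notMem_closure_iff.1 hcl
  have hfe : f ≠ e := ne_of_apply_ne w hlt.ne'
  exact hlt.not_ge <| hB.weight_le_of_indep_insert_sdiff hfin heB hfS (fun h ↦ hfB ⟨h, hfe⟩) hindep

theorem notMem_closure_weight_lt (hB : MaxWeightIndep M w S B) (hfin : B.Finite) (heB : e ∈ B) :
    e ∉ M.closure {x ∈ S | w e < w x} := by
  have hheavy : {x ∈ S | w e < w x} ∩ M.E ⊆ M.closure (B \ {e}) := fun x ⟨⟨hxS, hlt⟩, hxE⟩ ↦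
    hB.mem_closure_sdiff_singleton_of_weight_lt hfin heB hxS hxE hlt
  rw [← M.closure_inter_ground]
  exact fun he ↦ hB.indep.notMem_closure_sdiff_of_mem heB
    (M.closure_subset_closure_of_subset_closure hheavy he)

theorem weight_le_of_mem_fundCircuit (hB : MaxWeightIndep M w S B) (hfin : B.Finite)
    (heS : e ∈ S) (heB : e ∉ B) (hcl : e ∈ M.closure B) (hf : f ∈ M.fundCircuit e B) :
    w e ≤ w f := by
  obtain rfl | hfB := M.fundCircuit_subset_insert e B hf
  · exact le_rfl
  have hindep : M.Indep (insert e (B \ {f})) := by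
    rw [Set.insert_sdiff_singleton_comm (ne_of_mem_of_not_mem hfB heB).symm]
    exact (hB.indep.mem_fundCircuit_iff hcl heB).1 hf
  exact hB.weight_le_of_indep_insert_sdiff hfin hfB heS heB hindep

theorem mem_closure_weight_lt_of_notMem (hB : MaxWeightIndep M w S B) (hfin : B.Finite)
    (hw : Set.InjOn w S) (heS : e ∈ S) (heB : e ∉ B) (hcl : e ∈ M.closure B) :
    e ∈ M.closure {x ∈ S | w e < w x} := by
  have hheavy : M.fundCircuit e B \ {e} ⊆ {x ∈ S | w e < w x} := by
    rintro f ⟨hfC, hfe⟩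
    have hfS : f ∈ S := Set.insert_subset heS hB.subset (M.fundCircuit_subset_insert e B hfC)
    have hle : w e ≤ w f := hB.weight_le_of_mem_fundCircuit hfin heS heB hcl hfC
    exact ⟨hfS, hle.lt_of_ne fun heq ↦ hfe (hw hfS heS heq.symm)⟩
  have hcircuit : M.IsCircuit (M.fundCircuit e B) := hB.indep.fundCircuit_isCircuit hcl heB
  exact M.closure_subset_closure hheavy
    (hcircuit.mem_closure_sdiff_singleton_of_mem (M.mem_fundCircuit e B))

theorem mem_iff_notMem_closure_weight_lt (hB : MaxWeightIndep M w S B) (hfin : B.Finite)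
    (hw : Set.InjOn w S) (heS : e ∈ S) (heE : e ∈ M.E) (hpos : 0 < w e) :
    e ∈ B ↔ e ∉ M.closure {x ∈ S | w e < w x} := by
  refine ⟨hB.notMem_closure_weight_lt hfin, fun hlt ↦ ?_⟩
  by_contra heB
  exact hlt <| hB.mem_closure_weight_lt_of_notMem hfin hw heS heB
    (hB.mem_closure_of_weight_pos hfin heS heE hpos)

end MaxWeightIndep

theorem optimum_inter_subset_general {α : Type*} {M : Matroid α} {w : α → ℝ} {S A B BA : Set α}
    (hAS : A ⊆ S) (hw₀ : ∀ x ∈ A, w x ≠ 0) (hw : Set.InjOn w A)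
    (hB : MaxWeightIndep M w S B) (hBfin : B.Finite)
    (hBA : MaxWeightIndep M w A BA) (hBAfin : BA.Finite) :
    B ∩ A ⊆ BA := by
  rintro e ⟨heB, heA⟩
  have hpos : 0 < w e := (hB.weight_nonneg hBfin heB).lt_of_ne' (hw₀ e heA)
  have hS : e ∉ M.closure {x ∈ S | w e < w x} := hB.notMem_closure_weight_lt hBfin heB
  have hmono : M.closure {x ∈ A | w e < w x} ⊆ M.closure {x ∈ S | w e < w x} :=
    M.closure_subset_closure fun _ hx ↦ ⟨hAS hx.1, hx.2⟩
  have heE : e ∈ M.E := hB.indep.subset_ground heB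
  exact (hBA.mem_iff_notMem_closure_weight_lt hBAfin hw heA heE hpos).2 fun he ↦ hS (hmono he)

/-- If `B` is a maximum-weight independent subset of the ground set `E` and `B_A` is a
maximum-weight independent subset of `A ⊆ E` (weights positive and pairwise distinct),
then `B ∩ A ⊆ B_A`. -/
theorem optimum_inter_subset {α : Type*} (M : Matroid α) (hE : M.E.Finite)
    (w : α → ℝ) (hwpos : ∀ x ∈ M.E, 0 < w x) (hw : Set.InjOn w M.E)
    (A : Set α) (hA : A ⊆ M.E)
    (B : Set α) (hB : MaxWeightIndep M w M.E B)
    (BA : Set α) (hBA : MaxWeightIndep M w A BA) :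
    B ∩ A ⊆ BA := by
  exact optimum_inter_subset_general hA (fun x hx ↦ (hwpos x (hA hx)).ne') (hw.mono hA)
    hB (hE.subset hB.subset) hBA (hE.subset (hBA.subset.trans hA))
end

section
/- Let A ⊆ N and let O ⊆ A be a nonempty independent set, written O = {i_1 < i_2 < … < i_p}. Set i_0 = 0 and i_{p+1} = n, and for j ∈ {1, …, p+1} define P_j = {k ∈ N : i_{j-1} ≤ k ≤ i_j} \ A. Let ε ∈ {0, 1} and let J ⊆ N satisfy J ⊆ ⋃ {P_j : 1 ≤ j ≤ p+1, j ≡ ε (mod 2)} and |J ∩ P_j| ≤ 1 for every j ∈ {1, …, p+1} with j ≡ ε (mod 2). Then J is independent. -/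
/-- Independence in the laminar matroid on `N = {1, …, n}` given by the interval family `𝓛`
with bounds `b`: a set `I ⊆ N` is independent if `|I ∩ L| ≤ b L` for every `L ∈ 𝓛`. -/
def LamIndep (n : ℕ) (𝓛 : Finset (Finset ℕ)) (b : Finset ℕ → ℕ) (I : Finset ℕ) : Prop :=
  I ⊆ Finset.Icc 1 n ∧ ∀ L ∈ 𝓛, (I ∩ L).card ≤ b L

/-!
Call the indices `j ≡ ε (mod 2)` selected. Fix an interval `L`, and let `r` and `s` be the least
and the greatest selected index whose part meets `J ∩ L`. All of `i_r < ⋯ < i_{s-1}` lie between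
two points of `L`, hence in `L`, so `|O ∩ L| ≥ s - r`. On the other hand `|J ∩ L|` is at most the
number of selected indices in `{r, …, s}`. If `r < s`, then `r + 1` is not selected, so
`|J ∩ L| ≤ s - r ≤ |O ∩ L|`; if `r = s`, then `|J ∩ L| ≤ 1`.
-/

section IntervalParts

open Finset

theorem card_le_card_filter_inter_nonempty_mul {ι α : Type*} [DecidableEq α]
    {K : Finset α} {S : Finset ι} {P : ι → Finset α} {m : ℕ}
    (hK : K ⊆ S.biUnion P) (hKP : ∀ j ∈ S, #(K ∩ P j) ≤ m) :
    #K ≤ #{j ∈ S | (K ∩ P j).Nonempty} * m := by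
  have hcover : K ⊆ {j ∈ S | (K ∩ P j).Nonempty}.biUnion (K ∩ P ·) := by
    intro x hx
    obtain ⟨j, hj, hxj⟩ := mem_biUnion.1 (hK hx)
    have hxKj : x ∈ K ∩ P j := mem_inter.2 ⟨hx, hxj⟩
    exact mem_biUnion.2 ⟨j, mem_filter.2 ⟨hj, x, hxKj⟩, hxKj⟩
  exact (card_le_card hcover).trans <|
    card_biUnion_le_card_mul _ _ _ fun j hj => hKP j (mem_filter.1 hj).1

theorem card_le_max'_sub_min'_of_forall_succ_notMem {T : Finset ℕ} (hT : T.Nontrivial)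
    (hsucc : ∀ j ∈ T, j + 1 ∉ T) : #T ≤ T.max' hT.nonempty - T.min' hT.nonempty := by
  have hne : T.Nonempty := hT.nonempty
  have hlt : T.min' hne < T.max' hne :=
    min'_lt_max'_of_card T (one_lt_card_iff_nontrivial.2 hT)
  have hgap : T.min' hne + 1 ∉ T := hsucc _ (T.min'_mem hne)
  have hsub : T ⊆ (Icc (T.min' hne) (T.max' hne)).erase (T.min' hne + 1) := fun j hj =>
    mem_erase.2 ⟨ne_of_mem_of_not_mem hj hgap, mem_Icc.2 ⟨T.min'_le j hj, T.le_max' j hj⟩⟩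
  have hcard := card_le_card hsub
  rw [card_erase_of_mem (mem_Icc.2 ⟨by lia, hlt⟩), Nat.card_Icc] at hcard
  lia

variable {α : Type*} [LinearOrder α] {i : ℕ → α} {p : ℕ}

theorem sub_le_card_image_inter_of_ordConnected (hi : StrictMonoOn i (Set.Icc 1 p))
    {L : Finset α} (hL : (L : Set α).OrdConnected) {a b : ℕ} (ha : 1 ≤ a) (hb : b ≤ p + 1)
    {x y : α} (hx : x ∈ L) (hy : y ∈ L) (hxa : x ≤ i a) (hby : i (b - 1) ≤ y) :
    b - a ≤ #((Icc 1 p).image i ∩ L) := by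
  have hIcc : ∀ j ∈ Ico a b, j ∈ Set.Icc 1 p := fun j hj => by
    rw [mem_Ico] at hj
    exact ⟨by lia, by lia⟩
  have hmaps : ∀ j ∈ Ico a b, i j ∈ (Icc 1 p).image i ∩ L := by
    intro j hj
    have hj' := mem_Ico.1 hj
    have hxj : x ≤ i j :=
      hxa.trans (hi.monotoneOn (hIcc a (mem_Ico.2 (by lia))) (hIcc j hj) hj'.1)
    have hjy : i j ≤ y :=
      (hi.monotoneOn (hIcc j hj) (hIcc (b - 1) (mem_Ico.2 (by lia))) (by lia)).trans hby
    exact mem_inter.2 ⟨mem_image_of_mem i (mem_Icc.2 (hIcc j hj)), hL.out hx hy ⟨hxj, hjy⟩⟩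
  rw [← Nat.card_Ico]
  exact card_le_card_of_injOn i hmaps (hi.injOn.mono hIcc)

variable {S : Finset ℕ} {P : ℕ → Finset α} {J : Finset α}

theorem card_inter_le_max_one_card_image_inter (hi : StrictMonoOn i (Set.Icc 1 p))
    (hS : S ⊆ Icc 1 (p + 1)) (hsucc : ∀ j ∈ S, j + 1 ∉ S)
    (hP : ∀ j ∈ S, ∀ x ∈ P j, i (j - 1) ≤ x ∧ x ≤ i j)
    (hJ : J ⊆ S.biUnion P) (hJP : ∀ j ∈ S, #(J ∩ P j) ≤ 1)
    {L : Finset α} (hL : (L : Set α).OrdConnected) :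
    #(J ∩ L) ≤ max 1 #((Icc 1 p).image i ∩ L) := by
  let T := {j ∈ S | (J ∩ L ∩ P j).Nonempty}
  have hJT : #(J ∩ L) ≤ #T := by
    simpa only [mul_one] using card_le_card_filter_inter_nonempty_mul
      (inter_subset_left.trans hJ) fun j hj =>
        (card_le_card (inter_subset_inter_right inter_subset_left)).trans (hJP j hj)
  rcases le_or_gt #T 1 with hT | hT
  · exact le_max_of_le_left (hJT.trans hT)
  have hmeets : ∀ j ∈ T, j ∈ Icc 1 (p + 1) ∧ ∃ x ∈ L, i (j - 1) ≤ x ∧ x ≤ i j := by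
    intro j hj
    obtain ⟨hjS, x, hx⟩ := mem_filter.1 hj
    obtain ⟨hxJL, hxj⟩ := mem_inter.1 hx
    exact ⟨hS hjS, x, (mem_inter.1 hxJL).2, hP j hjS x hxj⟩
  have hTnt : T.Nontrivial := one_lt_card_iff_nontrivial.1 hT
  have hne : T.Nonempty := hTnt.nonempty
  obtain ⟨ha, x, hx, -, hxa⟩ := hmeets _ (T.min'_mem hne)
  obtain ⟨hb, y, hy, hby, -⟩ := hmeets _ (T.max'_mem hne)
  have hTsucc : ∀ j ∈ T, j + 1 ∉ T := fun j hj hj' =>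
    hsucc j (mem_filter.1 hj).1 (mem_filter.1 hj').1
  refine le_max_of_le_right ?_
  calc #(J ∩ L) ≤ #T := hJT
    _ ≤ T.max' hne - T.min' hne := card_le_max'_sub_min'_of_forall_succ_notMem hTnt hTsucc
    _ ≤ #((Icc 1 p).image i ∩ L) :=
      sub_le_card_image_inter_of_ordConnected hi hL (mem_Icc.1 ha).1 (mem_Icc.1 hb).2 hx hy hxa hby

theorem alternating_parts_indep_general {𝓛 : Set (Finset α)} {b : Finset α → ℕ}
    (h𝓛 : ∀ L ∈ 𝓛, (L : Set α).OrdConnected) (hb : ∀ L ∈ 𝓛, 1 ≤ b L)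
    {O : Finset α} (hOind : ∀ L ∈ 𝓛, #(O ∩ L) ≤ b L)
    (hi : StrictMonoOn i (Set.Icc 1 p)) (hiO : O = (Icc 1 p).image i)
    (hS : S ⊆ Icc 1 (p + 1)) (hsucc : ∀ j ∈ S, j + 1 ∉ S)
    (hP : ∀ j ∈ S, ∀ x ∈ P j, i (j - 1) ≤ x ∧ x ≤ i j)
    (hJ : J ⊆ S.biUnion P) (hJP : ∀ j ∈ S, #(J ∩ P j) ≤ 1) :
    ∀ L ∈ 𝓛, #(J ∩ L) ≤ b L := by
  subst hiO
  intro L hL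
  exact (card_inter_le_max_one_card_image_inter hi hS hsucc hP hJ hJP (h𝓛 L hL)).trans
    (max_le (hb L hL) (hOind L hL))

end IntervalParts

/-- If `O = {i_1 < … < i_p} ⊆ A` is a nonempty independent set, the parts
`P_j = {k ∈ N : i_{j-1} ≤ k ≤ i_j} \ A` (with `i_0 = 0`, `i_{p+1} = n`) are formed, and
`J` picks at most one element from each `P_j` with `j ≡ ε (mod 2)` (and nothing else),
then `J` is independent. -/
theorem alternating_parts_indep (n : ℕ) (hn : 1 ≤ n)
    (𝓛 : Finset (Finset ℕ)) (b : Finset ℕ → ℕ)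
    (h𝓛 : ∀ L ∈ 𝓛, L.Nonempty ∧ L ⊆ Finset.Icc 1 n ∧ ∃ p q : ℕ, L = Finset.Icc p q)
    (hlam : ∀ L ∈ 𝓛, ∀ L' ∈ 𝓛, L ⊆ L' ∨ L' ⊆ L ∨ Disjoint L L')
    (hN : Finset.Icc 1 n ∈ 𝓛)
    (hb : ∀ L ∈ 𝓛, 1 ≤ b L)
    (A : Finset ℕ) (hA : A ⊆ Finset.Icc 1 n)
    (O : Finset ℕ) (hOA : O ⊆ A) (hOne : O.Nonempty) (hOind : LamIndep n 𝓛 b O)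
    (p : ℕ) (hp : O.card = p)
    (i : ℕ → ℕ) (hi0 : i 0 = 0) (hip : i (p + 1) = n)
    (himono : ∀ j k : ℕ, j < k → k ≤ p + 1 → i j < i k)
    (hiO : O = Finset.image i (Finset.Icc 1 p))
    (ε : ℕ) (hε : ε = 0 ∨ ε = 1)
    (J : Finset ℕ)
    (hJsub : J ⊆ ((Finset.Icc 1 (p + 1)).filter (fun j => j % 2 = ε)).biUnion
      (fun j => ((Finset.Icc 1 n).filter (fun k => i (j - 1) ≤ k ∧ k ≤ i j)) \ A))
    (hJcard : ∀ j ∈ Finset.Icc 1 (p + 1), j % 2 = ε →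
      (J ∩ (((Finset.Icc 1 n).filter (fun k => i (j - 1) ≤ k ∧ k ≤ i j)) \ A)).card ≤ 1) :
    LamIndep n 𝓛 b J := by
  have hJN : J ⊆ Finset.Icc 1 n := hJsub.trans <| Finset.biUnion_subset.2 fun j _ =>
    Finset.sdiff_subset.trans (Finset.filter_subset _ _)
  have hord : ∀ L ∈ 𝓛, (L : Set ℕ).OrdConnected := fun L hL => by
    obtain ⟨-, -, q, r, rfl⟩ := h𝓛 L hL
    exact Finset.coe_Icc q r ▸ Set.ordConnected_Icc
  have hi : StrictMonoOn i (Set.Icc 1 p) := fun j _ k hk hjk =>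
    himono j k hjk (Nat.le_succ_of_le hk.2)
  refine ⟨hJN, alternating_parts_indep_general (𝓛 := 𝓛) hord hb hOind.2 hi hiO
    (Finset.filter_subset _ _) (fun j hj hj' => ?_)
    (fun j _ x hx => (Finset.mem_filter.1 (Finset.mem_sdiff.1 hx).1).2) hJsub
    (fun j hj => hJcard j (Finset.mem_filter.1 hj).1 (Finset.mem_filter.1 hj).2)⟩
  have hjε : j % 2 = ε := (Finset.mem_filter.1 hj).2
  have hjε' : (j + 1) % 2 = ε := (Finset.mem_filter.1 hj').2
  lia
end

section
/- Let I ⊆ N be nonempty. Then for every j ∈ I, the class N_j = {i ∈ N : rep(i) = j} is a set of consecutive integers containing j, i.e., there exist integers p ≤ j ≤ q with N_j = {p, p+1, …, q}. -/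
/-!
Write `L i` for the smallest member of `𝓛` that contains `i` and meets `I`, and let `r = rep i`.
The class of `r` is an interval as soon as it contains, with each `i`, every `k` between `i` and
`r`. Such a `k` lies in `L i`, hence `L k ⊆ L i`. Moreover `r ∈ L k`: any point `m` of `L k ∩ I`
also lies in `L i ∩ I`, so by the choice of `r` the segment from `k` to `m` passes through `r` or
through `i`, and in the second case `i ∈ L k` forces `L i ⊆ L k`. Since `r` already wins the
competition for `i` in the larger set `L i ∩ I`, it wins the one for the closer point `k` in
`L k ∩ I`.
-/

section

open Set

theorem exists_eq_Icc_of_ordConnected {α : Type*} [ConditionallyCompleteLinearOrder α]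
    [LocallyFiniteOrder α] {s : Set α} {a : α} (hs : s.OrdConnected) (h_below : BddBelow s)
    (h_above : BddAbove s) (ha : a ∈ s) : ∃ p q, p ≤ a ∧ a ≤ q ∧ s = Icc p q :=
  ⟨sInf s, sSup s, csInf_le h_below ha, le_csSup h_above ha,
    (Nonempty.ordConnected_iff_of_bdd ⟨a, ha⟩ h_below h_above).1 hs⟩

variable {α : Type*} {A B I N K L : Set α} {𝓛 : Set (Set α)} {i j k m r s : α}

/-- The members of the family `𝓛` that contain `i` and meet `I`. The set `L_i` of the paper is the
least of them with respect to inclusion. -/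
def membersMeeting (𝓛 : Set (Set α)) (I : Set α) (i : α) : Set (Set α) :=
  {L | L ∈ 𝓛 ∧ i ∈ L ∧ (L ∩ I).Nonempty}

theorem isLeast_membersMeeting_iff :
    IsLeast (membersMeeting 𝓛 I i) L ↔ L ∈ 𝓛 ∧ i ∈ L ∧ (L ∩ I).Nonempty ∧
      ∀ K ∈ 𝓛, i ∈ K → (K ∩ I).Nonempty → L ⊆ K := by
  simp only [IsLeast, membersMeeting, mem_lowerBounds, mem_ofPred_eq, and_assoc, and_imp]

variable [LinearOrder α]

/-- `IsRep A i r` says that `r` represents `i` in `A`: it is the last point of `A` up to `i`, or,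
if there is none, the first point of `A` after `i`. In the second case all of `A` lies after `i`,
so that `r` is simply the least element of `A`. -/
def IsRep (A : Set α) (i r : α) : Prop :=
  IsGreatest (A ∩ Iic i) r ∨ A ⊆ Ioi i ∧ IsLeast A r

theorem isRep_iff :
    IsRep A i r ↔
      ((∃ j ∈ A, j ≤ i) → r ∈ A ∧ r ≤ i ∧ ∀ j ∈ A, j ≤ i → j ≤ r) ∧
        ((¬∃ j ∈ A, j ≤ i) → r ∈ A ∧ i < r ∧ ∀ j ∈ A, i < j → r ≤ j) := by
  by_cases h : ∃ j ∈ A, j ≤ i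
  · have h_not_after : ¬A ⊆ Ioi i := fun hA ↦ h.elim fun j hj ↦ (hA hj.1).not_ge hj.2
    simp [IsRep, IsGreatest, mem_upperBounds, h, h_not_after, and_assoc]
  · have h_after : A ⊆ Ioi i := fun j hj ↦ not_le.1 fun hji ↦ h ⟨j, hj, hji⟩
    have h_none : ¬IsGreatest (A ∩ Iic i) r := fun hr ↦ h ⟨r, hr.1⟩
    simp only [IsRep, h_none, h_after, h, false_or, true_and, not_false_eq_true, forall_const,
      false_imp_iff]
    exact ⟨fun hr ↦ ⟨hr.1, h_after hr.1, fun j hj _ ↦ hr.2 hj⟩,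
      fun hr ↦ ⟨hr.1, fun j hj ↦ hr.2.2 j hj (h_after hj)⟩⟩

theorem isRep_self (hi : i ∈ A) : IsRep A i i :=
  .inl ⟨⟨hi, le_rfl⟩, fun _ ha ↦ ha.2⟩

namespace IsRep

theorem mem (hr : IsRep A i r) : r ∈ A :=
  hr.elim (fun h ↦ h.1.1) fun h ↦ h.2.1

theorem unique (hr : IsRep A i r) (hs : IsRep A i s) : r = s := by
  rcases hr with hr | ⟨hA, hr⟩ <;> rcases hs with hs | ⟨hA', hs⟩
  · exact hr.unique hs
  · exact absurd hr.1.2 (hA' hr.1.1).not_ge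
  · exact absurd hs.1.2 (hA hs.1.1).not_ge
  · exact hr.unique hs

theorem of_subset_of_mem_uIcc (hr : IsRep A i r) (hBA : B ⊆ A) (hrB : r ∈ B) (hk : k ∈ uIcc i r) :
    IsRep B k r := by
  rcases hr with ⟨⟨-, hri⟩, hmax⟩ | ⟨hA, hmin⟩
  · rw [uIcc_of_ge hri] at hk
    exact .inl ⟨⟨hrB, hk.1⟩, fun b hb ↦ hmax ⟨hBA hb.1, hb.2.trans hk.2⟩⟩
  · rw [uIcc_of_le (hA hmin.1).le] at hk
    rcases hk.2.eq_or_lt with rfl | hkr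
    · exact isRep_self hrB
    · exact .inr ⟨fun b hb ↦ hkr.trans_le (hmin.2 (hBA hb)), hrB, fun b hb ↦ hmin.2 (hBA hb)⟩

theorem mem_uIcc_or_mem_uIcc (hr : IsRep A i r) (hk : k ∈ uIcc i r) (hm : m ∈ A) :
    r ∈ uIcc k m ∨ i ∈ uIcc k m := by
  rcases hr with ⟨⟨-, hri⟩, hmax⟩ | ⟨hA, hmin⟩
  · rw [uIcc_of_ge hri] at hk
    rcases le_total m i with hmi | him
    · exact .inl (mem_uIcc_of_ge (hmax ⟨hm, hmi⟩) hk.1)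
    · exact .inr (mem_uIcc_of_le hk.2 him)
  · rw [uIcc_of_le (hA hmin.1).le] at hk
    exact .inl (mem_uIcc_of_le hk.2 (hmin.2 hm))

theorem of_isLeast_membersMeeting (h𝓛 : ∀ L ∈ 𝓛, L.OrdConnected)
    (hL : IsLeast (membersMeeting 𝓛 I i) L) (hK : IsLeast (membersMeeting 𝓛 I k) K)
    (hr : IsRep (L ∩ I) i r) (hk : k ∈ uIcc i r) : IsRep (K ∩ I) k r := by
  obtain ⟨⟨hL𝓛, hiL, hLI⟩, hL_min⟩ := hL
  obtain ⟨⟨hK𝓛, hkK, m, hmK, hmI⟩, hK_min⟩ := hK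
  have hKL : K ⊆ L := hK_min ⟨hL𝓛, (h𝓛 L hL𝓛).uIcc_subset hiL hr.mem.1 hk, hLI⟩
  have hkm : uIcc k m ⊆ K := (h𝓛 K hK𝓛).uIcc_subset hkK hmK
  have hrK : r ∈ K := by
    rcases hr.mem_uIcc_or_mem_uIcc hk ⟨hKL hmK, hmI⟩ with hrkm | hikm
    · exact hkm hrkm
    · exact hL_min ⟨hK𝓛, hkm hikm, m, hmK, hmI⟩ hr.mem.1
  exact hr.of_subset_of_mem_uIcc (inter_subset_inter_left I hKL) ⟨hrK, hr.mem.2⟩ hk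

end IsRep

theorem rep_class_is_interval_general (hN : N.OrdConnected) (h𝓛 : ∀ L ∈ 𝓛, L.OrdConnected)
    (hI : I ⊆ N) {Lf : α → Set α} (hLf : ∀ i ∈ N, IsLeast (membersMeeting 𝓛 I i) (Lf i))
    {rep : α → α} (hrep : ∀ i ∈ N, IsRep (Lf i ∩ I) i (rep i)) (hj : j ∈ I) :
    j ∈ {i | i ∈ N ∧ rep i = j} ∧ {i | i ∈ N ∧ rep i = j}.OrdConnected := by
  have hjN : j ∈ N := hI hj
  have hj_rep : rep j = j := (hrep j hjN).unique (isRep_self ⟨(hLf j hjN).1.2.1, hj⟩)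
  refine ⟨⟨hjN, hj_rep⟩, ordConnected_of_uIcc_subset_left (x := j) ?_⟩
  rintro i ⟨hiN, rfl⟩ k hk
  have hkN : k ∈ N := hN.uIcc_subset hjN hiN hk
  rw [uIcc_comm] at hk
  exact ⟨hkN, (hrep k hkN).unique <|
    (hrep i hiN).of_isLeast_membersMeeting h𝓛 (hLf i hiN) (hLf k hkN) hk⟩

end

/-- For every `j ∈ I`, the class `N_j = {i ∈ N : rep i = j}` is an interval of consecutive
integers containing `j`. Here `Lf i` is the smallest member of the laminar interval family `𝓛`
containing `i` and meeting `I`, and `rep i` is the largest element of `Lf i ∩ I` that is `≤ i`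
if one exists, and the smallest element of `Lf i ∩ I` that is `> i` otherwise. -/
theorem rep_class_is_interval
    (n : ℕ) (hn : 1 ≤ n)
    (𝓛 : Set (Set ℕ)) (h𝓛fin : 𝓛.Finite)
    (h𝓛 : ∀ L ∈ 𝓛, L.Nonempty ∧ L ⊆ Set.Icc 1 n ∧ ∃ p q : ℕ, L = Set.Icc p q)
    (hlam : ∀ L ∈ 𝓛, ∀ L' ∈ 𝓛, L ⊆ L' ∨ L' ⊆ L ∨ Disjoint L L')
    (hN : Set.Icc 1 n ∈ 𝓛)
    (I : Set ℕ) (hI : I ⊆ Set.Icc 1 n) (hIne : I.Nonempty)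
    (Lf : ℕ → Set ℕ)
    (hLf : ∀ i ∈ Set.Icc 1 n, Lf i ∈ 𝓛 ∧ i ∈ Lf i ∧ (Lf i ∩ I).Nonempty ∧
      ∀ L ∈ 𝓛, i ∈ L → (L ∩ I).Nonempty → Lf i ⊆ L)
    (rep : ℕ → ℕ)
    (hrep₁ : ∀ i ∈ Set.Icc 1 n, (∃ j ∈ Lf i ∩ I, j ≤ i) →
      rep i ∈ Lf i ∩ I ∧ rep i ≤ i ∧ ∀ j ∈ Lf i ∩ I, j ≤ i → j ≤ rep i)
    (hrep₂ : ∀ i ∈ Set.Icc 1 n, (¬ ∃ j ∈ Lf i ∩ I, j ≤ i) →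
      rep i ∈ Lf i ∩ I ∧ i < rep i ∧ ∀ j ∈ Lf i ∩ I, i < j → rep i ≤ j)
    :
    ∀ j ∈ I, ∃ p q : ℕ, p ≤ j ∧ j ≤ q ∧ {i | i ∈ Set.Icc 1 n ∧ rep i = j} = Set.Icc p q := by
  intro j hj
  have h_conn : ∀ L ∈ 𝓛, L.OrdConnected := fun L hL ↦ by
    obtain ⟨-, -, p, q, rfl⟩ := h𝓛 L hL
    exact Set.ordConnected_Icc
  have ⟨hj_mem, h_class⟩ := rep_class_is_interval_general Set.ordConnected_Icc h_conn hI
    (fun i hi ↦ isLeast_membersMeeting_iff.2 (hLf i hi))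
    (fun i hi ↦ isRep_iff.2 ⟨hrep₁ i hi, hrep₂ i hi⟩) hj
  exact exists_eq_Icc_of_ordConnected h_class (OrderBot.bddBelow _) ⟨n, fun i hi ↦ hi.1.2⟩ hj_mem
end

section
/- For every real number q with 0 < q ≤ 1, q³ · ∑_{(s,t,k) ∈ ℕ³} (1 − q)^{s+t+k+1} / (s + t + k + 1) = q(1 − q²)/2, where the sum is over all triples of natural numbers s, t, k ≥ 0. -/
/-!
Group the tuples by their sum `n`: by stars and bars there are `(n + k + 1).choose (k + 1)` of
length `k + 2`, and dividing this count by `n + 1` gives `(n + 1 + k).choose k / (k + 1)`. So the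
sum over `(k + 2)`-tuples is, up to the factor `1 / (k + 1)`, the negative binomial series of
`(1 - x) ^ (-(k + 1))` without its constant term, at `x = 1 - q`. Triples are the case `k = 1`.
-/

section Fibers

variable {ι κ : Type*} {φ : ι → κ}

theorem hasSum_fiber {M : Type*} [AddCommMonoid M] [TopologicalSpace M] (f : κ → M) (c : κ)
    [Finite {i // φ i = c}] :
    HasSum (fun i : {i // φ i = c} ↦ f (φ i)) (Nat.card {i // φ i = c} • f c) := by
  have := Fintype.ofFinite {i // φ i = c}
  simpa [fun i : {i // φ i = c} ↦ i.2] using hasSum_fintype fun i : {i // φ i = c} ↦ f (φ i)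

theorem hasSum_comp_of_hasSum_card_fiber {E : Type*} [NormedAddCommGroup E] [CompleteSpace E]
    [∀ c, Finite {i // φ i = c}] {f : κ → E} {a : E}
    (hf : Summable fun c ↦ Nat.card {i // φ i = c} * ‖f c‖)
    (ha : HasSum (fun c ↦ Nat.card {i // φ i = c} • f c) a) :
    HasSum (fun i ↦ f (φ i)) a := by
  rw [← (Equiv.sigmaFiberEquiv φ).hasSum_iff]
  refine ha.sigma_of_hasSum (fun c ↦ hasSum_fiber f c) (.of_norm ?_)
  refine (summable_sigma_of_nonneg fun _ ↦ norm_nonneg _).2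
    ⟨fun c ↦ (hasSum_fiber (‖f ·‖) c).summable, ?_⟩
  have fiber_tsum (c : κ) :
      ∑' i : {i // φ i = c}, ‖f (φ i)‖ = Nat.card {i // φ i = c} * ‖f c‖ := by
    rw [(hasSum_fiber (‖f ·‖) c).tsum_eq, nsmul_eq_mul]
  exact hf.congr fun c ↦ (fiber_tsum c).symm

end Fibers

section Tuples

variable {ι : Type*} [Fintype ι]

instance finite_tuples_sum_eq (n : ℕ) : Finite {p : ι → ℕ // ∑ i, p i = n} := by
  classical
  exact .of_equiv _ (Sym.equivNatSumOfFintype ι n)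

theorem natCard_tuples_sum_eq (n : ℕ) :
    Nat.card {p : ι → ℕ // ∑ i, p i = n} = (Fintype.card ι).multichoose n := by
  classical
  rw [← Nat.card_congr (Sym.equivNatSumOfFintype ι n), Sym.natCard_sym_eq_multichoose,
    Nat.card_eq_fintype_card]

end Tuples

theorem choose_div_add_one {K : Type*} [Field K] [CharZero K] (n k : ℕ) :
    ((n + k + 1).choose (k + 1) : K) / (n + 1 : ℕ) = (n + 1 + k).choose k / (k + 1) := by
  have h : (n + k + 1).choose (k + 1) * (k + 1) = (n + 1 + k).choose k * (n + 1) := by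
    rw [Nat.choose_succ_right_eq, show n + k + 1 - k = n + 1 by lia, add_right_comm]
  rw [div_eq_div_iff (Nat.cast_ne_zero.2 n.succ_ne_zero) k.cast_add_one_ne_zero]
  exact_mod_cast h

theorem hasSum_choose_mul_pow_succ_div {𝕜 : Type*} [NormedField 𝕜] [CompleteSpace 𝕜] [CharZero 𝕜]
    (k : ℕ) {x : 𝕜} (hx : ‖x‖ < 1) :
    HasSum (fun n : ℕ ↦ (n + k + 1).choose (k + 1) * (x ^ (n + 1) / (n + 1 : ℕ)))
      ((1 / (1 - x) ^ (k + 1) - 1) / (k + 1)) := by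
  have tail : HasSum (fun n : ℕ ↦ (n + 1 + k).choose k * x ^ (n + 1))
      (1 / (1 - x) ^ (k + 1) - 1) := by
    have series := hasSum_choose_mul_geometric_of_norm_lt_one k hx
    rw [← hasSum_nat_add_iff' 1] at series
    simpa using series
  convert tail.div_const (k + 1 : 𝕜) using 2 with n
  rw [mul_div_left_comm, choose_div_add_one, mul_comm, div_mul_eq_mul_div]

section RCLike

variable {𝕜 ι : Type*} [RCLike 𝕜] [Fintype ι] {k : ℕ}

theorem hasSum_pow_succ_div_tuples (hk : Fintype.card ι = k + 2) {x : 𝕜} (hx : ‖x‖ < 1) :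
    HasSum (fun p : ι → ℕ ↦ x ^ ((∑ i, p i) + 1) / ((∑ i, p i) + 1 : ℕ))
      ((1 / (1 - x) ^ (k + 1) - 1) / (k + 1)) := by
  have card_eq (n : ℕ) :
      Nat.card {p : ι → ℕ // ∑ i, p i = n} = (n + k + 1).choose (k + 1) := by
    rw [natCard_tuples_sum_eq, hk, Nat.multichoose_eq, show k + 2 + n - 1 = n + (k + 1) by lia,
      Nat.choose_symm_add, add_assoc]
  have series := hasSum_choose_mul_pow_succ_div k hx
  apply hasSum_comp_of_hasSum_card_fiber (f := fun n : ℕ ↦ x ^ (n + 1) / (n + 1 : ℕ))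
  · simpa only [card_eq, norm_mul, RCLike.norm_natCast] using series.summable.norm
  · simpa only [card_eq, nsmul_eq_mul] using series

theorem triple_sum_value_general (hk : Fintype.card ι = k + 2) {q : 𝕜} (hq : ‖1 - q‖ < 1) :
    q ^ (k + 2) * ∑' p : ι → ℕ, (1 - q) ^ ((∑ i, p i) + 1) / ((∑ i, p i) + 1 : ℕ) =
      q * (1 - q ^ (k + 1)) / (k + 1) := by
  have q_ne_zero : q ≠ 0 := by
    rintro rfl
    simp at hq
  rw [(hasSum_pow_succ_div_tuples hk hq).tsum_eq, sub_sub_cancel]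
  field_simp
  ring

end RCLike

theorem tsum_fin_three_sum {α M : Type*} [AddCommMonoid α] [AddCommMonoid M] [TopologicalSpace M]
    (f : α → M) :
    ∑' p : Fin 3 → α, f (∑ i, p i) = ∑' p : α × α × α, f (p.1 + p.2.1 + p.2.2) := by
  let e : α × α × α ≃ (Fin 3 → α) :=
    (Equiv.prodCongrRight fun _ ↦ (finTwoArrowEquiv α).symm).trans (Fin.consEquiv fun _ ↦ α)
  rw [← e.tsum_eq]
  simp [e, Fin.sum_univ_succ, add_assoc]

/-- For every real `q` with `0 < q ≤ 1`,
`q³ · ∑_{s,t,k ≥ 0} (1 - q)^{s+t+k+1} / (s + t + k + 1) = q (1 - q²) / 2`. -/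
theorem triple_sum_value (q : ℝ) (hq0 : 0 < q) (hq1 : q ≤ 1) :
    q ^ 3 * ∑' p : ℕ × ℕ × ℕ,
        (1 - q) ^ (p.1 + p.2.1 + p.2.2 + 1) / ((p.1 + p.2.1 + p.2.2 + 1 : ℕ) : ℝ) =
      q * (1 - q ^ 2) / 2 := by
  have norm_lt_one : ‖1 - q‖ < 1 := abs_lt.2 ⟨by linarith, by linarith⟩
  rw [← tsum_fin_three_sum fun n : ℕ ↦ (1 - q) ^ (n + 1) / ((n + 1 : ℕ) : ℝ),
    triple_sum_value_general (k := 1) (Fintype.card_fin 3) norm_lt_one]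
  norm_num
end

section
/- Let N be a finite set with |N| = n and let 𝓛 be a laminar family of subsets of N, i.e., for all L, L' ∈ 𝓛 either L ⊆ L', or L' ⊆ L, or L ∩ L' = ∅. Then there exists a bijection f : Fin n → N such that for every L ∈ 𝓛 the preimage f⁻¹(L) is an interval of consecutive indices, i.e., there exist p ≤ q with f⁻¹(L) = {m : p ≤ m ≤ q}. -/
/-!
Let the branch of `x` away from `y` be the union of `{x}` and all members that contain `x` but not
`y`. Laminarity makes the branch of `x` away from `y` disjoint from the branch of `y` away from `x`.
Well-order the ground set and put `x` before `y` when the former has the smaller least element.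
If a member contains `x` and `z` but not `y`, then `x` and `z` have the same branch away from `y`,
and `y` has the same branch away from either, so `x` and `z` lie on the same side of `y`. This makes
the members convex and the relation transitive. A finite ground set is then numbered increasingly.
-/

section Laminar

variable {α : Type*}

/-- A family of sets is laminar if any two members are nested or disjoint. -/
def IsLaminar (𝓛 : Set (Set α)) : Prop :=
  ∀ L ∈ 𝓛, ∀ L' ∈ 𝓛, L ⊆ L' ∨ L' ⊆ L ∨ L ∩ L' = ∅

/-- The branch of `x` away from `y`: in the tree of a finite laminar family, it is the child
containing `x` of the smallest member containing both points, or `{x}` if no child contains `x`. -/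
def laminarBranch (𝓛 : Set (Set α)) (x y : α) : Set α :=
  insert x (⋃₀ {L ∈ 𝓛 | x ∈ L ∧ y ∉ L})

/-- The order in which the points are numbered: `x` precedes `y` if some element of the branch of
`x` away from `y` lies below the whole branch of `y` away from `x`. For a well-order this compares
the least elements of the two branches. -/
def LaminarPrecedes [LT α] (𝓛 : Set (Set α)) (x y : α) : Prop :=
  ∃ a ∈ laminarBranch 𝓛 x y, ∀ b ∈ laminarBranch 𝓛 y x, a < b

variable {𝓛 : Set (Set α)} {L L' : Set α} {x y z : α}

theorem self_mem_laminarBranch : x ∈ laminarBranch 𝓛 x y :=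
  Set.mem_insert x _

theorem laminarBranch_congr_right (h : ∀ L ∈ 𝓛, x ∈ L → (y ∈ L ↔ z ∈ L)) :
    laminarBranch 𝓛 x y = laminarBranch 𝓛 x z := by
  have hsep : {L ∈ 𝓛 | x ∈ L ∧ y ∉ L} = {L ∈ 𝓛 | x ∈ L ∧ z ∉ L} := by
    ext L
    exact and_congr_right fun hL => and_congr_right fun hx => not_congr (h L hL hx)
  rw [laminarBranch, laminarBranch, hsep]

namespace IsLaminar

theorem subset_or_subset (h : IsLaminar 𝓛) (hL : L ∈ 𝓛) (hL' : L' ∈ 𝓛) (hx : x ∈ L)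
    (hx' : x ∈ L') : L ⊆ L' ∨ L' ⊆ L := by
  rcases h L hL L' hL' with hsub | hsub | hdisj
  · exact .inl hsub
  · exact .inr hsub
  · exact (Set.eq_empty_iff_forall_notMem.1 hdisj x ⟨hx, hx'⟩).elim

theorem disjoint_laminarBranch (h : IsLaminar 𝓛) (hxy : x ≠ y) :
    Disjoint (laminarBranch 𝓛 x y) (laminarBranch 𝓛 y x) := by
  rw [Set.disjoint_left]
  rintro w (rfl | ⟨L, ⟨hL, hxL, hyL⟩, hwL⟩) (rfl | ⟨L', ⟨hL', hyL', hxL'⟩, hwL'⟩)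
  · exact hxy rfl
  · exact hxL' hwL'
  · exact hyL hwL
  · rcases h.subset_or_subset hL hL' hwL hwL' with hsub | hsub
    · exact hxL' (hsub hxL)
    · exact hyL (hsub hyL')

theorem laminarBranch_subset_of_mem (h : IsLaminar 𝓛) (hL : L ∈ 𝓛) (hx : x ∈ L) (hz : z ∈ L)
    (hy : y ∉ L) : laminarBranch 𝓛 x y ⊆ laminarBranch 𝓛 z y := by
  rintro w (rfl | ⟨L', ⟨hL', hxL', hyL'⟩, hwL'⟩)
  · exact .inr ⟨L, ⟨hL, hz, hy⟩, hx⟩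
  · rcases h.subset_or_subset hL hL' hx hxL' with hsub | hsub
    · exact .inr ⟨L', ⟨hL', hsub hz, hyL'⟩, hwL'⟩
    · exact .inr ⟨L, ⟨hL, hz, hy⟩, hsub hwL'⟩

theorem laminarBranch_eq_left (h : IsLaminar 𝓛) (hL : L ∈ 𝓛) (hx : x ∈ L) (hz : z ∈ L)
    (hy : y ∉ L) : laminarBranch 𝓛 x y = laminarBranch 𝓛 z y :=
  (h.laminarBranch_subset_of_mem hL hx hz hy).antisymm (h.laminarBranch_subset_of_mem hL hz hx hy)

theorem laminarBranch_eq_right (h : IsLaminar 𝓛) (hL : L ∈ 𝓛) (hx : x ∈ L) (hz : z ∈ L)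
    (hy : y ∉ L) : laminarBranch 𝓛 y x = laminarBranch 𝓛 y z := by
  have subset_of_mem {w : α} (hw : w ∈ L) {L' : Set α} (hL' : L' ∈ 𝓛) (hyL' : y ∈ L')
      (hwL' : w ∈ L') : L ⊆ L' :=
    (h.subset_or_subset hL hL' hw hwL').resolve_right fun hsub => hy (hsub hyL')
  exact laminarBranch_congr_right fun L' hL' hyL' =>
    ⟨fun hxL' => subset_of_mem hx hL' hyL' hxL' hz, fun hzL' => subset_of_mem hz hL' hyL' hzL' hx⟩

theorem precedes_iff_left [LT α] (h : IsLaminar 𝓛) (hL : L ∈ 𝓛) (hx : x ∈ L) (hz : z ∈ L)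
    (hy : y ∉ L) : LaminarPrecedes 𝓛 x y ↔ LaminarPrecedes 𝓛 z y := by
  rw [LaminarPrecedes, LaminarPrecedes, h.laminarBranch_eq_left hL hx hz hy,
    h.laminarBranch_eq_right hL hx hz hy]

theorem precedes_iff_right [LT α] (h : IsLaminar 𝓛) (hL : L ∈ 𝓛) (hx : x ∈ L) (hz : z ∈ L)
    (hy : y ∉ L) : LaminarPrecedes 𝓛 y x ↔ LaminarPrecedes 𝓛 y z := by
  rw [LaminarPrecedes, LaminarPrecedes, h.laminarBranch_eq_left hL hx hz hy,
    h.laminarBranch_eq_right hL hx hz hy]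

end IsLaminar

theorem LaminarPrecedes.asymm [Preorder α] (hxy : LaminarPrecedes 𝓛 x y) :
    ¬ LaminarPrecedes 𝓛 y x := by
  rintro ⟨b, hb, hba⟩
  obtain ⟨a, ha, hab⟩ := hxy
  exact lt_asymm (hab b hb) (hba a ha)

namespace IsLaminar

theorem mem_of_precedes_of_precedes [Preorder α] (h : IsLaminar 𝓛) (hL : L ∈ 𝓛) (hx : x ∈ L)
    (hz : z ∈ L) (hxy : LaminarPrecedes 𝓛 x y) (hyz : LaminarPrecedes 𝓛 y z) : y ∈ L := by
  by_contra hy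
  exact hyz.asymm ((h.precedes_iff_left hL hx hz hy).1 hxy)

theorem precedes_trans [Preorder α] (h : IsLaminar 𝓛) (hxy : LaminarPrecedes 𝓛 x y)
    (hyz : LaminarPrecedes 𝓛 y z) : LaminarPrecedes 𝓛 x z := by
  by_cases hsep_z : ∃ L ∈ 𝓛, x ∈ L ∧ y ∈ L ∧ z ∉ L
  · obtain ⟨L, hL, hx, hy, hz⟩ := hsep_z
    exact (h.precedes_iff_left hL hx hy hz).2 hyz
  by_cases hsep_x : ∃ L ∈ 𝓛, y ∈ L ∧ z ∈ L ∧ x ∉ L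
  · obtain ⟨L, hL, hy, hz, hx⟩ := hsep_x
    exact (h.precedes_iff_right hL hy hz hx).1 hxy
  have hsep_y : ∀ L ∈ 𝓛, x ∈ L → z ∈ L → y ∈ L := fun L hL hx hz =>
    h.mem_of_precedes_of_precedes hL hx hz hxy hyz
  -- No member contains exactly two of the points, so each of them has the same branch away from
  -- the other two, and the three branches are compared by a transitive relation.
  have hbranch_x : laminarBranch 𝓛 x y = laminarBranch 𝓛 x z :=
    laminarBranch_congr_right (by grind)
  have hbranch_y : laminarBranch 𝓛 y x = laminarBranch 𝓛 y z :=
    laminarBranch_congr_right (by grind)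
  have hbranch_z : laminarBranch 𝓛 z x = laminarBranch 𝓛 z y :=
    laminarBranch_congr_right (by grind)
  obtain ⟨a, ha, hab⟩ := hxy
  obtain ⟨b, hb, hbc⟩ := hyz
  exact ⟨a, hbranch_x ▸ ha, fun c hc => (hab b (hbranch_y ▸ hb)).trans (hbc c (hbranch_z ▸ hc))⟩

theorem precedes_or_precedes [LinearOrder α] [WellFoundedLT α] (h : IsLaminar 𝓛) (hxy : x ≠ y) :
    LaminarPrecedes 𝓛 x y ∨ LaminarPrecedes 𝓛 y x := by
  obtain ⟨a, ha, ha_min⟩ :=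
    wellFounded_lt.has_min (laminarBranch 𝓛 x y) ⟨x, self_mem_laminarBranch⟩
  obtain ⟨b, hb, hb_min⟩ :=
    wellFounded_lt.has_min (laminarBranch 𝓛 y x) ⟨y, self_mem_laminarBranch⟩
  have hab : a ≠ b := (h.disjoint_laminarBranch hxy).ne_of_mem ha hb
  rcases hab.lt_or_gt with hlt | hlt
  · exact .inl ⟨a, ha, fun c hc => hlt.trans_le (not_lt.1 (hb_min c hc))⟩
  · exact .inr ⟨b, hb, fun c hc => hlt.trans_le (not_lt.1 (ha_min c hc))⟩

theorem isStrictTotalOrder_precedes [LinearOrder α] [WellFoundedLT α] (h : IsLaminar 𝓛) :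
    IsStrictTotalOrder α (LaminarPrecedes 𝓛) where
  irrefl _ hxx := hxx.asymm hxx
  trans _ _ _ := h.precedes_trans
  trichotomous _ _ hxy hyx := by
    by_contra hne
    exact (h.precedes_or_precedes hne).elim hxy hyx

end IsLaminar

end Laminar

theorem exists_eq_Icc_of_ordConnected_s17 {α : Type*} [LinearOrder α] {s : Set α}
    (hs : s.OrdConnected) (hfin : s.Finite) (hne : s.Nonempty) :
    ∃ a b, a ≤ b ∧ s = Set.Icc a b := by
  obtain ⟨a, ha, ha_le⟩ := s.exists_min_image id hfin hne
  obtain ⟨b, hb, le_hb⟩ := s.exists_max_image id hfin hne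
  have hsub : s ⊆ Set.Icc a b := fun x hx => ⟨ha_le x hx, le_hb x hx⟩
  exact ⟨a, b, ha_le b hb, hsub.antisymm (hs.out ha hb)⟩

theorem exists_fin_bounds_of_ordConnected {n : ℕ} {s : Set (Fin n)} (hs : s.OrdConnected) :
    ∃ p q : ℕ, p ≤ q ∧ s = {m : Fin n | p ≤ (m : ℕ) ∧ (m : ℕ) ≤ q} := by
  rcases s.eq_empty_or_nonempty with rfl | hne
  · refine ⟨n, n, le_rfl, (Set.eq_empty_of_forall_notMem ?_).symm⟩
    exact fun m hm => m.isLt.not_ge hm.1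
  · obtain ⟨a, b, hab, rfl⟩ := exists_eq_Icc_of_ordConnected_s17 hs s.toFinite hne
    exact ⟨a, b, hab, rfl⟩

theorem exists_consecutive_numbering_general {α : Type*} (𝓛 : Set (Set α)) (h : IsLaminar 𝓛) :
    ∃ _ : LinearOrder α, ∀ L ∈ 𝓛, L.OrdConnected := by
  classical
  obtain ⟨r, _, hr⟩ : ∃ r : α → α → Prop, IsStrictTotalOrder α r ∧
      ∀ L ∈ 𝓛, ∀ x ∈ L, ∀ z ∈ L, ∀ y, r x y → r y z → y ∈ L := by
    obtain ⟨_, _⟩ := exists_wellFoundedLT α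
    exact ⟨LaminarPrecedes 𝓛, h.isStrictTotalOrder_precedes,
      fun L hL x hx z hz y => h.mem_of_precedes_of_precedes hL hx hz⟩
  let := linearOrderOfSTO r
  refine ⟨this, fun L hL => ⟨?_⟩⟩
  rintro x hx z hz y ⟨rfl | hxy, rfl | hyz⟩
  · exact hx
  · exact hx
  · exact hz
  · exact hr L hL x hx z hz y hxy hyz

/-- Any finite set `N` with a laminar family `𝓛` of subsets admits a numbering
`f : Fin n → N` under which every member of `𝓛` consists of consecutively numbered
elements. -/
theorem exists_consecutive_numbering {γ : Type*} (N : Finset γ) (n : ℕ) (hn : N.card = n)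
    (𝓛 : Set (Set γ)) (hsub : ∀ L ∈ 𝓛, L ⊆ ↑N)
    (hlam : ∀ L ∈ 𝓛, ∀ L' ∈ 𝓛, L ⊆ L' ∨ L' ⊆ L ∨ L ∩ L' = ∅) :
    ∃ f : Fin n → γ, Function.Injective f ∧ Set.range f = ↑N ∧
      ∀ L ∈ 𝓛, ∃ p q : ℕ, p ≤ q ∧
        f ⁻¹' L = {m : Fin n | p ≤ (m : ℕ) ∧ (m : ℕ) ≤ q} := by
  obtain ⟨_, hconn⟩ := exists_consecutive_numbering_general 𝓛 hlam
  exact ⟨N.orderEmbOfFin hn, (N.orderEmbOfFin hn).injective, N.range_orderEmbOfFin hn, fun L hL =>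
    exists_fin_bounds_of_ordConnected ((hconn L hL).preimage_mono (N.orderEmbOfFin hn).monotone)⟩
end
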